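/- arXiv:2407.07108 — 14 statements merged into one kernel-verified Lean document; each statement's English description precedes it below -/
import Mathlib

section
/- For any parameters I_ph, I_o, A, R_s, G_sh > 0 and any voltage V ∈ ℝ, the map I ↦ I_o·(exp((V + R_s·I)/A) − 1) + G_sh·(V + R_s·I) + I is strictly increasing and surjective on ℝ; consequently there exists exactly one current I ∈ ℝ satisfying the single-diode model equation I_ph = I_o·(exp((V + R_s·I)/A) − 1) + G_sh·(V + R_s·I) + I. -/
/-- For any parameters I_ph, I_o, A, R_s, G_sh > 0 and any voltage V, the map
I ↦ I_o·(exp((V + R_s·I)/A) − 1) + G_sh·(V + R_s·I) + I is strictly increasing and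
surjective on ℝ; consequently there exists exactly one current I satisfying the
single-diode model equation. -/
theorem stmt_0 (Iph Io A Rs Gsh : ℝ)
    (hIph : 0 < Iph) (hIo : 0 < Io) (hA : 0 < A) (hRs : 0 < Rs) (hGsh : 0 < Gsh)
    (V : ℝ) :
    StrictMono (fun I : ℝ =>
      Io * (Real.exp ((V + Rs * I) / A) - 1) + Gsh * (V + Rs * I) + I) ∧
    Function.Surjective (fun I : ℝ =>
      Io * (Real.exp ((V + Rs * I) / A) - 1) + Gsh * (V + Rs * I) + I) ∧
    ∃! I : ℝ, Iph = Io * (Real.exp ((V + Rs * I) / A) - 1) + Gsh * (V + Rs * I) + I := by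
  have key : ∀ x y : ℝ, x ≤ y →
      (Io * (Real.exp ((V + Rs * x) / A) - 1) + Gsh * (V + Rs * x) + x) + (y - x) ≤
      Io * (Real.exp ((V + Rs * y) / A) - 1) + Gsh * (V + Rs * y) + y := by
    intro x y h
    have h1 : Io * (Real.exp ((V + Rs * x) / A) - 1) ≤
        Io * (Real.exp ((V + Rs * y) / A) - 1) := by gcongr
    have h2 : Gsh * (V + Rs * x) ≤ Gsh * (V + Rs * y) := by gcongr
    linarith
  have hmono : StrictMono (fun I : ℝ =>
      Io * (Real.exp ((V + Rs * I) / A) - 1) + Gsh * (V + Rs * I) + I) := by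
    intro x y h
    have := key x y h.le
    dsimp only
    linarith
  have hsurj : Function.Surjective (fun I : ℝ =>
      Io * (Real.exp ((V + Rs * I) / A) - 1) + Gsh * (V + Rs * I) + I) := by
    apply Continuous.surjective
    · fun_prop
    · refine Filter.tendsto_atTop.2 fun b => ?_
      filter_upwards [Filter.eventually_ge_atTop (0 : ℝ), Filter.eventually_ge_atTop
        (b - (Io * (Real.exp ((V + Rs * 0) / A) - 1) + Gsh * (V + Rs * 0) + 0))] with x h0 h1
      have := key 0 x h0
      linarith
    · refine Filter.tendsto_atBot.2 fun b => ?_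
      filter_upwards [Filter.eventually_le_atBot (0 : ℝ), Filter.eventually_le_atBot
        (b - (Io * (Real.exp ((V + Rs * 0) / A) - 1) + Gsh * (V + Rs * 0) + 0))] with x h0 h1
      have := key x 0 h0
      linarith
  refine ⟨hmono, hsurj, ?_⟩
  obtain ⟨I, hI⟩ := hsurj Iph
  exact ⟨I, hI.symm, fun J hJ => hmono.injective (hJ.symm.trans hI.symm)⟩
end

section
/- Let I_ph, I_o, A, R_s, G_sh > 0 and let I : ℝ → ℝ be the SDM solution function. Then I is differentiable on ℝ and for every V its derivative equals −(I_o·exp((V + R_s·I(V))/A) + A·G_sh) / (A + R_s·(I_o·exp((V + R_s·I(V))/A) + A·G_sh)); in particular I'(V) < 0 for all V, so I is strictly decreasing on ℝ. -/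
/-- The SDM solution function is differentiable with the indicated (negative)
derivative, hence strictly decreasing. -/
theorem stmt_1 (Iph Io A Rs Gsh : ℝ)
    (hIph : 0 < Iph) (hIo : 0 < Io) (hA : 0 < A) (hRs : 0 < Rs) (hGsh : 0 < Gsh)
    (I : ℝ → ℝ)
    (hI : ∀ V, Iph = Io * (Real.exp ((V + Rs * I V) / A) - 1) + Gsh * (V + Rs * I V) + I V) :
    Differentiable ℝ I ∧
    (∀ V, deriv I V =
      -(Io * Real.exp ((V + Rs * I V) / A) + A * Gsh) /
        (A + Rs * (Io * Real.exp ((V + Rs * I V) / A) + A * Gsh))) ∧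
    (∀ V, deriv I V < 0) ∧
    StrictAnti I := by
  set u : ℝ → ℝ := fun V => V + Rs * I V with hu
  set h : ℝ → ℝ := fun x => x - Rs * (Iph - Io * (Real.exp (x / A) - 1) - Gsh * x) with hh
  have hinv : ∀ V, h (u V) = V := by
    intro V
    have e : Iph - Io * (Real.exp (u V / A) - 1) - Gsh * u V = I V := by
      have := hI V
      simp only [hu]
      linarith
    simp only [hh]
    rw [e]
    simp only [hu]
    ring
  have hcont : Continuous u := by
    have hl : LipschitzWith 1 u := by
      apply LipschitzWith.of_le_add
      intro x y
      rcases le_total (u x) (u y) with hxy | hxy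
      · linarith [dist_nonneg (x := x) (y := y)]
      · have e1 : Real.exp (u y / A) ≤ Real.exp (u x / A) := by
          apply Real.exp_le_exp.mpr
          gcongr
        have e2 : h (u x) - h (u y) = (u x - u y)
            + Rs * (Io * (Real.exp (u x / A) - Real.exp (u y / A)) + Gsh * (u x - u y)) := by
          simp only [hh]
          ring
        have e3 : 0 ≤ Rs * (Io * (Real.exp (u x / A) - Real.exp (u y / A))
            + Gsh * (u x - u y)) := by
          have := sub_nonneg.mpr e1
          have := sub_nonneg.mpr hxy
          positivity
        rw [hinv, hinv] at e2
        have := le_abs_self (x - y)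
        rw [Real.dist_eq]
        linarith
    exact hl.continuous
  have hder : ∀ V, HasDerivAt I (-(Io * Real.exp ((V + Rs * I V) / A) + A * Gsh) /
        (A + Rs * (Io * Real.exp ((V + Rs * I V) / A) + A * Gsh))) V := by
    intro V
    have hd : HasDerivAt h
        (1 - Rs * (-(Io * (Real.exp (u V / A) * (1 / A))) - Gsh * 1)) (u V) := by
      have h1 := (((hasDerivAt_id (u V)).div_const A).exp.sub_const 1).const_mul Io
      exact (hasDerivAt_id (u V)).sub
        (((h1.const_sub Iph).sub ((hasDerivAt_id (u V)).const_mul Gsh)).const_mul Rs)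
    have hE := Real.exp_pos (u V / A)
    have hpos : 0 < 1 - Rs * (-(Io * (Real.exp (u V / A) * (1 / A))) - Gsh * 1) := by
      have : 0 < Rs * (Io * (Real.exp (u V / A) * (1 / A)) + Gsh) := by positivity
      linarith
    have hud := HasDerivAt.of_local_left_inverse hcont.continuousAt hd hpos.ne'
      (Filter.Eventually.of_forall hinv)
    have hId := (hud.sub (hasDerivAt_id V)).div_const Rs
    have hfun : I = fun V => (u V - V) / Rs := by
      funext W
      simp only [hu]
      field_simp
      ring
    have hfun2 : HasDerivAt I _ V := hId.congr_of_eventuallyEq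
      (Filter.Eventually.of_forall fun W => congrFun hfun W)
    convert hfun2 using 1
    change -(Io * Real.exp (u V / A) + A * Gsh) /
        (A + Rs * (Io * Real.exp (u V / A) + A * Gsh)) = _
    generalize Real.exp (u V / A) = E at *
    have e : 1 - Rs * (-(Io * (E * (1 / A))) - Gsh * 1)
        = (A + Rs * (Io * E + A * Gsh)) / A := by
      field_simp
      ring
    rw [e]
    have : A + Rs * (Io * E + A * Gsh) ≠ 0 := by positivity
    field_simp
    ring
  have hneg : ∀ V, deriv I V < 0 := by
    intro V
    rw [(hder V).deriv]
    apply div_neg_of_neg_of_pos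
    · have : 0 < Io * Real.exp ((V + Rs * I V) / A) + A * Gsh := by positivity
      linarith
    · positivity
  exact ⟨fun V => (hder V).differentiableAt, fun V => (hder V).deriv, hneg,
    strictAnti_of_deriv_neg hneg⟩
end

section
/- Let I_ph, I_o, A, R_s, G_sh > 0 and let I : ℝ → ℝ be the SDM solution function. Then I is strictly concave on ℝ; equivalently, its second derivative at every V equals −I_o·A·exp((V + R_s·I(V))/A) / (A + R_s·(I_o·exp((V + R_s·I(V))/A) + A·G_sh))³, which is strictly negative. -/
/-- The SDM solution function is strictly concave on ℝ; its second derivative at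
every V equals the indicated expression, which is strictly negative. -/
theorem stmt_2 (Iph Io A Rs Gsh : ℝ)
    (hIph : 0 < Iph) (hIo : 0 < Io) (hA : 0 < A) (hRs : 0 < Rs) (hGsh : 0 < Gsh)
    (I : ℝ → ℝ)
    (hI : ∀ V, Iph = Io * (Real.exp ((V + Rs * I V) / A) - 1) + Gsh * (V + Rs * I V) + I V) :
    StrictConcaveOn ℝ Set.univ I ∧
    ∀ V, deriv (deriv I) V =
        -(Io * A * Real.exp ((V + Rs * I V) / A)) /
          (A + Rs * (Io * Real.exp ((V + Rs * I V) / A) + A * Gsh)) ^ 3 ∧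
      deriv (deriv I) V < 0 := by
  obtain ⟨u, hu⟩ : ∃ u : ℝ → ℝ, ∀ V, u V = V + Rs * I V := ⟨_, fun _ => rfl⟩
  simp only [← hu] at hI ⊢
  have hIu : ∀ V, I V = (u V - V) / Rs := fun V => by rw [hu]; field_simp; ring
  have hg : ∀ V, u V - Rs * (Iph - Io * (Real.exp (u V / A) - 1) - Gsh * u V) = V := by
    intro V
    have h1 := hI V
    have h2 := hu V
    have h3 : Iph - Io * (Real.exp (u V / A) - 1) - Gsh * u V = I V := by linarith
    rw [h3]; linarith
  have hD : ∀ V, 0 < A + Rs * (Io * Real.exp (u V / A) + A * Gsh) := fun V => by positivity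
  have hlip : LipschitzWith 1 u := by
    apply LipschitzWith.of_le_add
    intro x y
    by_cases h : u x ≤ u y
    · have := dist_nonneg (x := x) (y := y)
      linarith
    · push Not at h
      have he : Real.exp (u y / A) ≤ Real.exp (u x / A) := by gcongr
      have h1 := hg x
      have h2 := hg y
      have h3 : x - y ≤ dist x y := by rw [Real.dist_eq]; exact le_abs_self _
      have h4 : 0 ≤ Rs * (Io * (Real.exp (u x / A) - Real.exp (u y / A)) + Gsh * (u x - u y)) := by
        have : 0 ≤ Real.exp (u x / A) - Real.exp (u y / A) := by linarith
        have : 0 ≤ u x - u y := by linarith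
        positivity
      nlinarith
  have hu' : ∀ V, HasDerivAt u (A / (A + Rs * (Io * Real.exp (u V / A) + A * Gsh))) V := by
    intro V
    have hgd : HasDerivAt (fun w : ℝ => w - Rs * (Iph - Io * (Real.exp (w / A) - 1) - Gsh * w))
        ((A + Rs * (Io * Real.exp (u V / A) + A * Gsh)) / A) (u V) := by
      have h0 := hasDerivAt_id' (u V)
      have h1 := (((h0.div_const A).exp.sub_const 1).const_mul Io)
      have h2 := h0.fun_sub ((((h1.const_sub Iph).fun_sub (h0.const_mul Gsh))).const_mul Rs)
      refine h2.congr_deriv ?_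
      field_simp
      ring
    have := HasDerivAt.of_local_left_inverse (hlip.continuous.continuousAt (x := V)) hgd
      (by have := hD V; positivity) (Filter.Eventually.of_forall hg)
    rwa [inv_div] at this
  have hI' : ∀ V, HasDerivAt I ((A / (A + Rs * (Io * Real.exp (u V / A) + A * Gsh)) - 1) / Rs) V := by
    intro V
    have h := ((hu' V).fun_sub (hasDerivAt_id' V)).div_const Rs
    rwa [← funext hIu] at h
  have hdI : deriv I = fun V => (A / (A + Rs * (Io * Real.exp (u V / A) + A * Gsh)) - 1) / Rs :=
    funext fun V => (hI' V).deriv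
  have h2 : ∀ V, deriv (deriv I) V = -(Io * A * Real.exp (u V / A)) /
          (A + Rs * (Io * Real.exp (u V / A) + A * Gsh)) ^ 3 := by
    intro V
    have hne := (hD V).ne'
    rw [hdI]
    have h1 := (((((hu' V).div_const A).exp.const_mul Io).add_const (A * Gsh)).const_mul Rs).const_add A
    have h3 := (((hasDerivAt_const V A).fun_div h1 hne).sub_const 1).div_const Rs
    rw [h3.deriv]
    generalize Real.exp (u V / A) = e at *
    generalize hDD : A + Rs * (Io * e + A * Gsh) = D at *
    field_simp
    ring
  have h3 : ∀ V, deriv (deriv I) V < 0 := by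
    intro V
    rw [h2 V]
    have := hD V
    apply div_neg_of_neg_of_pos
    · have : 0 < Io * A * Real.exp (u V / A) := by positivity
      linarith
    · positivity
  refine ⟨?_, fun V => ⟨h2 V, h3 V⟩⟩
  apply strictConcaveOn_univ_of_deriv2_neg
  · exact continuous_iff_continuousAt.2 fun V => (hI' V).continuousAt
  · intro V
    exact h3 V
end

section
/- Let I_ph, I_o, A, R_s, G_sh > 0 and let I : ℝ → ℝ be the SDM solution function. Then the short-circuit current I_sc := I(0) is strictly positive, and there exists a unique V_oc > 0 (the open-circuit voltage) with I(V_oc) = 0. -/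
/-- For the SDM solution function the short-circuit current I(0) is strictly
positive, and there exists a unique V_oc > 0 with I(V_oc) = 0. -/
theorem stmt_3 (Iph Io A Rs Gsh : ℝ)
    (hIph : 0 < Iph) (hIo : 0 < Io) (hA : 0 < A) (hRs : 0 < Rs) (hGsh : 0 < Gsh)
    (I : ℝ → ℝ)
    (hI : ∀ V, Iph = Io * (Real.exp ((V + Rs * I V) / A) - 1) + Gsh * (V + Rs * I V) + I V) :
    0 < I 0 ∧ ∃! Voc : ℝ, 0 < Voc ∧ I Voc = 0 := by
  obtain ⟨g, hg⟩ : ∃ g : ℝ → ℝ, g = fun x => Io * (Real.exp (x / A) - 1) + Gsh * x := ⟨_, rfl⟩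
  have hI' : ∀ V, Iph = g (V + Rs * I V) + I V := by
    intro V; rw [hg]; exact hI V
  have hmono : StrictMono g := by
    intro x y hxy
    have h1 : Real.exp (x / A) < Real.exp (y / A) :=
      Real.exp_lt_exp.mpr (div_lt_div_of_pos_right hxy hA)
    have h2 := mul_lt_mul_of_pos_left h1 hIo
    have h3 := mul_lt_mul_of_pos_left hxy hGsh
    simp only [hg]
    linarith
  have h0 : g 0 = 0 := by simp [hg]
  have hcont : Continuous g := by rw [hg]; fun_prop
  refine ⟨?_, ?_⟩
  · by_contra! h
    have h1 : 0 + Rs * I 0 ≤ 0 := by nlinarith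
    have h2 := hmono.monotone h1
    have := hI' 0
    linarith
  · have hb : 0 ≤ Iph / Gsh := by positivity
    have hgb : Iph ≤ g (Iph / Gsh) := by
      have h1 : 1 ≤ Real.exp (Iph / Gsh / A) := Real.one_le_exp (by positivity)
      have h2 : Gsh * (Iph / Gsh) = Iph := by field_simp
      have h3 : 0 ≤ Io * (Real.exp (Iph / Gsh / A) - 1) := mul_nonneg hIo.le (by linarith)
      simp only [hg]
      linarith
    obtain ⟨V, -, hV⟩ := intermediate_value_Icc hb hcont.continuousOn
      (show Iph ∈ Set.Icc (g 0) (g (Iph / Gsh)) from ⟨by linarith, hgb⟩)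
    refine ⟨V, ⟨?_, ?_⟩, ?_⟩
    · apply hmono.lt_iff_lt.mp; linarith
    · have := hI' V
      rcases lt_trichotomy (I V) 0 with h | h | h
      · have h2 := hmono (show V + Rs * I V < V by nlinarith)
        linarith
      · exact h
      · have h2 := hmono (show V < V + Rs * I V by nlinarith)
        linarith
    · rintro W ⟨-, hW⟩
      have := hI' W
      rw [hW] at this
      simp only [mul_zero, add_zero] at this
      exact hmono.injective (by rw [hV, ← this])
end

section
/- Let I_ph, I_o, A, R_s, G_sh > 0, let I : ℝ → ℝ be the SDM solution function, let I_sc := I(0) and let V_oc > 0 satisfy I(V_oc) = 0. Then the power function P(V) = V·I(V) attains its maximum over [0, V_oc] at some point, and every maximizer V_mp of P over [0, V_oc] satisfies V_oc/2 < V_mp < V_oc and I_sc/2 < I(V_mp) < I_sc. -/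
/-- The power P(V) = V·I(V) of the SDM attains its maximum over [0, V_oc], and
every maximizer V_mp satisfies V_oc/2 < V_mp < V_oc and I_sc/2 < I(V_mp) < I_sc. -/
theorem stmt_6 (Iph Io A Rs Gsh : ℝ)
    (hIph : 0 < Iph) (hIo : 0 < Io) (hA : 0 < A) (hRs : 0 < Rs) (hGsh : 0 < Gsh)
    (I : ℝ → ℝ)
    (hI : ∀ V, Iph = Io * (Real.exp ((V + Rs * I V) / A) - 1) + Gsh * (V + Rs * I V) + I V)
    (Voc : ℝ) (hVoc : 0 < Voc) (hVocI : I Voc = 0) :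
    (∃ Vmp ∈ Set.Icc (0 : ℝ) Voc, IsMaxOn (fun V => V * I V) (Set.Icc 0 Voc) Vmp) ∧
    ∀ Vmp ∈ Set.Icc (0 : ℝ) Voc, IsMaxOn (fun V => V * I V) (Set.Icc 0 Voc) Vmp →
      Voc / 2 < Vmp ∧ Vmp < Voc ∧ I 0 / 2 < I Vmp ∧ I Vmp < I 0 := by
  obtain ⟨g, hg⟩ : ∃ g : ℝ → ℝ, g = fun z => Io * (Real.exp (z / A) - 1) + Gsh * z := ⟨_, rfl⟩
  have hIg : ∀ V, I V = Iph - g (V + Rs * I V) := by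
    intro V
    have := hI V
    simp only [hg]
    linarith
  have gmono : StrictMono g := by
    intro a b hab
    have h1 : Real.exp (a / A) < Real.exp (b / A) :=
      Real.exp_lt_exp.mpr (div_lt_div_of_pos_right hab hA)
    have h2 := mul_lt_mul_of_pos_left h1 hIo
    have h3 := mul_lt_mul_of_pos_left hab hGsh
    simp only [hg]
    linarith
  have gder : ∀ z, HasDerivAt g (Io * (Real.exp (z / A) * (1 / A)) + Gsh) z := by
    intro z
    rw [hg]
    have h1 := ((((hasDerivAt_id z).div_const A).exp.sub_const 1).const_mul Io).add
      ((hasDerivAt_id z).const_mul Gsh)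
    refine HasDerivAt.congr_deriv (f := fun z => Io * (Real.exp (z / A) - 1) + Gsh * z) h1 ?_
    simp only [id, mul_one]
  have gtan : ∀ z w, w ≠ z →
      g z + (Io * (Real.exp (z / A) * (1 / A)) + Gsh) * (w - z) < g w := by
    intro z w hw
    have hne : (w - z) / A ≠ 0 := div_ne_zero (sub_ne_zero.mpr hw) hA.ne'
    have h1 := Real.add_one_lt_exp hne
    have h2 : Real.exp (w / A) = Real.exp (z / A) * Real.exp ((w - z) / A) := by
      rw [← Real.exp_add]; congr 1; ring
    have h3 := mul_lt_mul_of_pos_left h1 (mul_pos hIo (Real.exp_pos (z / A)))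
    simp only [hg]
    rw [h2]
    have h4 : Io * (Real.exp (z / A) * (1 / A)) * (w - z)
      = Io * Real.exp (z / A) * ((w - z) / A) := by ring
    nlinarith
  have zmono : StrictMono (fun V => V + Rs * I V) := by
    intro a b hab
    by_contra hcon
    simp only [not_lt] at hcon
    have h1 := gmono.monotone hcon
    have h2 := hIg a
    have h3 := hIg b
    have h4 : I a ≤ I b := by linarith
    have h5 := mul_le_mul_of_nonneg_left h4 hRs.le
    linarith
  have Ianti : ∀ a b, a < b → I b < I a := by
    intro a b hab
    have h1 := gmono (zmono hab)
    have h2 := hIg a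
    have h3 := hIg b
    simp only at h1
    linarith
  obtain ⟨v, hv⟩ : ∃ v : ℝ → ℝ, v = fun z => z - Rs * (Iph - g z) := ⟨_, rfl⟩
  have vmono : StrictMono v := by
    intro a b hab
    have h2 := mul_lt_mul_of_pos_left (gmono hab) hRs
    simp only [hv]
    linarith
  have vz : ∀ V, v (V + Rs * I V) = V := by
    intro V
    simp only [hv]
    rw [← hIg V]; ring
  have Iv : ∀ z, I (v z) = Iph - g z := by
    intro z
    have h1 : v z + Rs * I (v z) = z := vmono.injective (vz (v z))
    rw [hIg (v z), h1]
  have hvoc : v Voc = Voc := by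
    have := vz Voc
    rwa [hVocI, mul_zero, add_zero] at this
  have hv0 : v (Rs * I 0) = 0 := by
    have := vz 0
    rwa [zero_add] at this
  have gcont : Continuous g := continuous_iff_continuousAt.mpr fun z => (gder z).continuousAt
  have z0lt : Rs * I 0 < Voc := by
    have := zmono hVoc
    simpa [hVocI] using this
  have vmem : ∀ z ∈ Set.Icc (Rs * I 0) Voc, v z ∈ Set.Icc (0 : ℝ) Voc := by
    intro z hz
    refine ⟨?_, ?_⟩
    · rw [← hv0]; exact vmono.monotone hz.1
    · rw [← hvoc]; exact vmono.monotone hz.2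
  constructor
  · have hc : ContinuousOn (fun z => v z * (Iph - g z)) (Set.Icc (Rs * I 0) Voc) := by
      rw [hv]
      fun_prop
    obtain ⟨z, hz, hmax⟩ := isCompact_Icc.exists_isMaxOn (Set.nonempty_Icc.mpr z0lt.le) hc
    refine ⟨v z, vmem z hz, ?_⟩
    intro V hV
    have hm : V + Rs * I V ∈ Set.Icc (Rs * I 0) Voc := by
      have h1 := zmono.monotone hV.1
      have h2 := zmono.monotone hV.2
      simp only [hVocI, mul_zero, add_zero, zero_add] at h1 h2
      exact ⟨h1, h2⟩
    have := hmax hm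
    simp only [Set.mem_ofPred_eq] at this ⊢
    rw [vz, ← hIg] at this
    rw [Iv]
    exact this
  · intro V hV hmax
    have hpos : 0 < V * I V := by
      have h1 := hmax (show Voc / 2 ∈ Set.Icc (0 : ℝ) Voc from ⟨by linarith, by linarith⟩)
      have h2 := Ianti (Voc / 2) Voc (by linarith)
      rw [hVocI] at h2
      have h3 : 0 < Voc / 2 * I (Voc / 2) := by positivity
      exact lt_of_lt_of_le h3 h1
    have hV0 : 0 < V := by
      rcases hV.1.eq_or_lt with h | h
      · rw [← h, zero_mul] at hpos; exact absurd hpos (lt_irrefl _)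
      · exact h
    have hV1 : V < Voc := by
      rcases hV.2.eq_or_lt with h | h
      · rw [h, hVocI, mul_zero] at hpos; exact absurd hpos (lt_irrefl _)
      · exact h
    have hz0 := zmono hV0
    have hz1 := zmono hV1
    simp only [hVocI, mul_zero, add_zero, zero_add] at hz0 hz1
    have hvV := vz V
    have hIV := hIg V
    obtain ⟨z, hz⟩ : ∃ z, z = V + Rs * I V := ⟨_, rfl⟩
    rw [← hz] at hz0 hz1 hvV hIV
    have hloc : IsLocalMax (fun z => v z * (Iph - g z)) z := by
      filter_upwards [Icc_mem_nhds hz0 hz1] with w hw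
      have := hmax (vmem w hw)
      simp only [Set.mem_ofPred_eq] at this
      rw [Iv] at this
      rw [hvV, ← hIV]
      exact this
    have t1 := gtan z Voc hz1.ne'
    have t0 := gtan z (Rs * I 0) hz0.ne
    have hd := gder z
    have hc : 0 < Io * (Real.exp (z / A) * (1 / A)) + Gsh := by positivity
    generalize Io * (Real.exp (z / A) * (1 / A)) + Gsh = c at t1 t0 hd hc
    have hdv : HasDerivAt v (1 - Rs * (-c)) z := by
      rw [hv]
      exact (hasDerivAt_id z).sub ((hd.const_sub Iph).const_mul Rs)
    have hfoc := hloc.hasDerivAt_eq_zero (hdv.mul (hd.const_sub Iph))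
    rw [hvV, ← hIV] at hfoc
    have e0 := hIg 0
    have e1 := hIg Voc
    rw [hVocI, mul_zero, add_zero] at e1
    rw [zero_add] at e0
    refine ⟨?_, hV1, ?_, Ianti 0 V hV0⟩
    · have h : 0 < c * (2 * V - Voc) := by
        rw [hz] at t1 hIV
        nlinarith
      have := pos_of_mul_pos_right h hc.le
      linarith
    · have h : 0 < (1 + Rs * c) * (2 * I V - I 0) := by
        have : g z = Iph - I V := by linarith
        rw [this, hz] at t0
        nlinarith
      have := pos_of_mul_pos_right h (by positivity)
      linarith
end

section
/- Let I_ph, I_o, A > 0 and R_s, G_sh ≥ 0. Let I_SD : ℝ → ℝ be the SDM solution function with parameters (I_ph, I_o, A, R_s, G_sh) and let I_RL : ℝ → ℝ be the SDM solution function with parameters (I_ph, I_o, A, 0, 0) (the null resistive loss model, NRLM). Then for every V ≥ 0 with I_SD(V) ≥ 0 one has I_SD(V) ≤ I_RL(V), and consequently V·I_SD(V) ≤ V·I_RL(V); the photovoltaic power delivered by the SDM never exceeds that of the NRLM with the same I_ph, I_o, A. -/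
/-- The photovoltaic power delivered by the SDM never exceeds that of the null
resistive loss model (R_s = G_sh = 0) with the same I_ph, I_o, A. -/
theorem stmt_8 (Iph Io A Rs Gsh : ℝ)
    (hIph : 0 < Iph) (hIo : 0 < Io) (hA : 0 < A) (hRs : 0 ≤ Rs) (hGsh : 0 ≤ Gsh)
    (ISD IRL : ℝ → ℝ)
    (hSD : ∀ V, Iph =
      Io * (Real.exp ((V + Rs * ISD V) / A) - 1) + Gsh * (V + Rs * ISD V) + ISD V)
    (hRL : ∀ V, Iph = Io * (Real.exp (V / A) - 1) + IRL V) :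
    ∀ V, 0 ≤ V → 0 ≤ ISD V → ISD V ≤ IRL V ∧ V * ISD V ≤ V * IRL V := by
  intro V hV hI
  have hr : 0 ≤ Rs * ISD V := mul_nonneg hRs hI
  have hg : 0 ≤ Gsh * (V + Rs * ISD V) := mul_nonneg hGsh (by linarith)
  have hd : V / A ≤ (V + Rs * ISD V) / A :=
    div_le_div_of_nonneg_right (by linarith) hA.le
  have he : Io * (Real.exp (V / A) - 1) ≤ Io * (Real.exp ((V + Rs * ISD V) / A) - 1) :=
    mul_le_mul_of_nonneg_left (by linarith [Real.exp_le_exp.mpr hd]) hIo.le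
  have h : ISD V ≤ IRL V := by linarith [hSD V, hRL V]
  exact ⟨h, mul_le_mul_of_nonneg_left h hV⟩
end

section
/- Let I_sc, V_oc > 0, let 0 < V_x < V_oc and I_sc·(1 − V_x/V_oc) < I_x < I_sc, and define the piecewise-linear curve I(V) := I_sc − ((I_sc − I_x)/V_x)·V for 0 ≤ V ≤ V_x, and I(V) := I_x·(V_oc − V)/(V_oc − V_x) for V_x < V ≤ V_oc. Then the power P(V) = V·I(V) attains its maximum over [0, V_oc] at some point V* satisfying V* ≥ V_oc/2 and I(V*) ≥ I_sc/2. -/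
/-- For the simplified two-segment I-V curve through (0, I_sc), (V_x, I_x) and
(V_oc, 0), the power P(V) = V·I(V) attains its maximum over [0, V_oc] at some
point V* with V* ≥ V_oc/2 and I(V*) ≥ I_sc/2. -/
theorem stmt_9 (Isc Voc Vx Ix : ℝ) (hIsc : 0 < Isc) (hVoc : 0 < Voc)
    (hVx0 : 0 < Vx) (hVxVoc : Vx < Voc)
    (hIx1 : Isc * (1 - Vx / Voc) < Ix) (hIx2 : Ix < Isc)
    (I : ℝ → ℝ)
    (hI1 : ∀ V, 0 ≤ V → V ≤ Vx → I V = Isc - (Isc - Ix) / Vx * V)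
    (hI2 : ∀ V, Vx < V → V ≤ Voc → I V = Ix * (Voc - V) / (Voc - Vx)) :
    ∃ Vstar ∈ Set.Icc (0 : ℝ) Voc,
      IsMaxOn (fun V => V * I V) (Set.Icc 0 Voc) Vstar ∧
      Voc / 2 ≤ Vstar ∧ Isc / 2 ≤ I Vstar := by
  have hd : 0 < Voc - Vx := by linarith
  obtain ⟨a, ha⟩ : ∃ a, a = (Isc - Ix) / Vx := ⟨_, rfl⟩
  obtain ⟨b, hb⟩ : ∃ b, b = Ix / (Voc - Vx) := ⟨_, rfl⟩
  have haV : a * Vx = Isc - Ix := by rw [ha]; field_simp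
  have hbV : b * (Voc - Vx) = Ix := by rw [hb]; field_simp
  have hch : Isc * (Voc - Vx) < Ix * Voc := by
    have h := mul_lt_mul_of_pos_right hIx1 hVoc
    have e : Isc * (1 - Vx / Voc) * Voc = Isc * (Voc - Vx) := by field_simp
    linarith
  have ha0 : 0 < a := by rw [ha]; exact div_pos (by linarith) hVx0
  have haI : a * Voc < Isc := by
    have : (a * Voc) * Vx < Isc * Vx := by
      have : (a * Voc) * Vx = (Isc - Ix) * Voc := by rw [← haV]; ring
      nlinarith
    exact lt_of_mul_lt_mul_right this hVx0.le
  have hbI : Isc < b * Voc := by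
    have : Isc * (Voc - Vx) < (b * Voc) * (Voc - Vx) := by
      have : (b * Voc) * (Voc - Vx) = Ix * Voc := by rw [← hbV]; ring
      linarith
    exact lt_of_mul_lt_mul_right this hd.le
  have hab : a < b := lt_of_mul_lt_mul_right (haI.trans hbI) hVoc.le
  have hb0 : 0 < b := ha0.trans hab
  have h1 : ∀ V, 0 ≤ V → V ≤ Vx → I V = Isc - a * V := by
    intro V h h'; rw [hI1 V h h', ha]
  have h2 : ∀ V, Vx ≤ V → V ≤ Voc → I V = b * (Voc - V) := by
    intro V h h'
    rcases h.eq_or_lt with h | h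
    · subst h; rw [h1 _ hVx0.le le_rfl]; linarith
    · rw [hI2 V h h', hb]; ring
  have l1 : ∀ V, 0 ≤ V → V ≤ Voc → I V ≤ Isc - a * V := by
    intro V h h'
    rcases le_total V Vx with hv | hv
    · exact (h1 V h hv).le
    · rw [h2 V hv h']; nlinarith [mul_nonneg (sub_nonneg.2 hv) (sub_nonneg.2 hab.le)]
  have l2 : ∀ V, 0 ≤ V → V ≤ Voc → I V ≤ b * (Voc - V) := by
    intro V h h'
    rcases le_total V Vx with hv | hv
    · rw [h1 V h hv]; nlinarith [mul_nonneg (sub_nonneg.2 hv) (sub_nonneg.2 hab.le)]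
    · exact (h2 V hv h').le
  rcases le_total Vx (Voc / 2) with hc | hc
  · have e := h2 (Voc / 2) hc (by linarith)
    refine ⟨Voc / 2, ⟨by linarith, by linarith⟩, ?_, le_rfl, by rw [e]; linarith⟩
    rintro V ⟨hV0, hV1⟩
    show V * I V ≤ Voc / 2 * I (Voc / 2)
    rw [e]
    have := mul_le_mul_of_nonneg_left (l2 V hV0 hV1) hV0
    nlinarith [mul_nonneg hb0.le (sq_nonneg (V - Voc / 2))]
  · rcases le_total (2 * (a * Vx)) Isc with hv | hv
    · have e := h1 Vx hVx0.le le_rfl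
      refine ⟨Vx, ⟨hVx0.le, hVxVoc.le⟩, ?_, hc, by rw [e]; linarith⟩
      rintro V ⟨hV0, hV1⟩
      show V * I V ≤ Vx * I Vx
      rcases le_total V Vx with hw | hw
      · rw [e, h1 V hV0 hw]
        have : 0 ≤ Isc - a * (Vx + V) := by
          nlinarith [mul_le_mul_of_nonneg_left hw ha0.le]
        nlinarith [mul_nonneg (sub_nonneg.2 hw) this]
      · rw [h2 V hw hV1, h2 Vx le_rfl hVxVoc.le]
        have : 0 ≤ V + Vx - Voc := by linarith
        nlinarith [mul_nonneg hb0.le (mul_nonneg (sub_nonneg.2 hw) this)]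
    · obtain ⟨W, hW⟩ : ∃ W, W = Isc / (2 * a) := ⟨_, rfl⟩
      have hWa : a * W = Isc / 2 := by rw [hW]; field_simp
      have hW1 : W ≤ Vx := le_of_mul_le_mul_left (by linarith : a * W ≤ a * Vx) ha0
      have hW2 : Voc / 2 ≤ W := le_of_mul_le_mul_left (by linarith : a * (Voc / 2) ≤ a * W) ha0
      have e := h1 W (by linarith) hW1
      refine ⟨W, ⟨by linarith, by linarith⟩, ?_, hW2, by rw [e]; linarith⟩
      rintro V ⟨hV0, hV1⟩
      show V * I V ≤ W * I W
      rw [e]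
      have := mul_le_mul_of_nonneg_left (l1 V hV0 hV1) hV0
      have hI' : Isc = 2 * (a * W) := by linarith
      rw [hI'] at this ⊢
      nlinarith [mul_nonneg ha0.le (sq_nonneg (V - W))]
end

section
/- Let I_sc, V_oc > 0 and 0 < R_s < V_oc/I_sc, and define the simplified NSH curve I(V) := I_sc for 0 ≤ V ≤ V_oc − R_s·I_sc, and I(V) := (V_oc − V)/R_s for V_oc − R_s·I_sc < V ≤ V_oc. Then the power P(V) = V·I(V) attains its maximum over [0, V_oc] exactly at V_mp = V_oc − R_s·I_sc with current I(V_mp) = I_sc if 0 < R_s < V_oc/(2·I_sc), and exactly at V_mp = V_oc/2 with current I(V_mp) = V_oc/(2·R_s) if V_oc/(2·I_sc) ≤ R_s < V_oc/I_sc. -/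
theorem max_aux (f : ℝ → ℝ) (s : Set ℝ) (w : ℝ) (hw : w ∈ s)
    (h : ∀ V ∈ s, V ≠ w → f V < f w) :
    IsMaxOn f s w ∧ ∀ V ∈ s, IsMaxOn f s V → V = w := by
  refine ⟨?_, ?_⟩
  · intro V hV
    by_cases e : V = w
    · subst e; exact le_refl (f V)
    · exact (h V hV e).le
  · intro V hV hm
    by_contra e
    exact absurd (hm hw) (not_le.mpr (h V hV e))

/-- For the simplified NSH curve, the power P(V) = V·I(V) attains its maximum
over [0, V_oc] exactly at V_mp = V_oc − R_s·I_sc with current I_sc if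
0 < R_s < V_oc/(2 I_sc), and exactly at V_mp = V_oc/2 with current V_oc/(2 R_s)
if V_oc/(2 I_sc) ≤ R_s < V_oc/I_sc. -/
theorem stmt_10 (Isc Voc Rs : ℝ) (hIsc : 0 < Isc) (hVoc : 0 < Voc)
    (hRs0 : 0 < Rs) (hRs1 : Rs < Voc / Isc)
    (I : ℝ → ℝ)
    (hI1 : ∀ V, 0 ≤ V → V ≤ Voc - Rs * Isc → I V = Isc)
    (hI2 : ∀ V, Voc - Rs * Isc < V → V ≤ Voc → I V = (Voc - V) / Rs) :
    (Rs < Voc / (2 * Isc) →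
      IsMaxOn (fun V => V * I V) (Set.Icc 0 Voc) (Voc - Rs * Isc) ∧
      (∀ V ∈ Set.Icc (0 : ℝ) Voc,
        IsMaxOn (fun V => V * I V) (Set.Icc 0 Voc) V → V = Voc - Rs * Isc) ∧
      I (Voc - Rs * Isc) = Isc) ∧
    (Voc / (2 * Isc) ≤ Rs →
      IsMaxOn (fun V => V * I V) (Set.Icc 0 Voc) (Voc / 2) ∧
      (∀ V ∈ Set.Icc (0 : ℝ) Voc,
        IsMaxOn (fun V => V * I V) (Set.Icc 0 Voc) V → V = Voc / 2) ∧
      I (Voc / 2) = Voc / (2 * Rs)) := by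
  rw [lt_div_iff₀ hIsc] at hRs1
  have hm : 0 < Rs * Isc := mul_pos hRs0 hIsc
  refine ⟨fun h => ?_, fun h => ?_⟩
  · rw [lt_div_iff₀ (by positivity)] at h
    have hw : I (Voc - Rs * Isc) = Isc := hI1 _ (by linarith) le_rfl
    rw [← and_assoc]
    refine ⟨max_aux _ _ _ ⟨by linarith, by linarith⟩ ?_, hw⟩
    rintro V ⟨h0, h1⟩ hne
    show V * I V < (Voc - Rs * Isc) * I (Voc - Rs * Isc)
    rw [hw]
    rcases lt_or_gt_of_ne hne with hl | hl
    · rw [hI1 V h0 hl.le]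
      exact mul_lt_mul_of_pos_right hl hIsc
    · rw [hI2 V hl h1, ← mul_div_assoc, div_lt_iff₀ hRs0]
      have := mul_pos (sub_pos.mpr hl) (show 0 < V - Rs * Isc by linarith)
      nlinarith
  · rw [div_le_iff₀ (by positivity)] at h
    have hw : I (Voc / 2) = Voc / (2 * Rs) := by
      rcases le_or_gt (Voc / 2) (Voc - Rs * Isc) with hl | hl
      · rw [hI1 _ (by linarith) hl, eq_div_iff (by positivity)]
        linarith
      · rw [hI2 _ hl (by linarith)]
        field_simp
        ring
    rw [← and_assoc]
    refine ⟨max_aux _ _ _ ⟨by linarith, by linarith⟩ ?_, hw⟩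
    rintro V ⟨h0, h1⟩ hne
    show V * I V < Voc / 2 * I (Voc / 2)
    have hsq : 0 < (V - Voc / 2) ^ 2 := by
      have := sub_ne_zero.mpr hne
      positivity
    have e : Voc / 2 * (Voc / (2 * Rs)) = (Voc ^ 2 / 4) / Rs := by
      field_simp
      norm_num
    rw [hw, e, lt_div_iff₀ hRs0]
    rcases le_or_gt V (Voc - Rs * Isc) with hl | hl
    · rw [hI1 V h0 hl]
      have := mul_nonneg h0 (sub_nonneg.mpr hl)
      nlinarith
    · rw [hI2 V hl h1, mul_assoc, div_mul_cancel₀ _ hRs0.ne']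
      nlinarith
end

section
/- Fix I_sc, V_oc > 0, 0 ≤ R_s < V_oc/I_sc and 0 ≤ G_sh < I_sc/(V_oc − R_s·I_sc). For A > 0 let I_ph(A) and I_o(A) be the unique parameters for which the SDM curve with parameters (I_ph(A), I_o(A), A, R_s, G_sh) passes through (0, I_sc) and (V_oc, 0), and assume I_ph(A) > 0 for the values of A considered. If 0 < A₁ < A₂, then the corresponding SDM solution functions satisfy I_{A₁}(V) > I_{A₂}(V) for every V ∈ (0, V_oc); consequently the maximum power satisfies max_{V ∈ [0, V_oc]} V·I_{A₁}(V) > max_{V ∈ [0, V_oc]} V·I_{A₂}(V), i.e., the maximum power of the SDM decreases with the equivalent factor of the diode A. -/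
lemma ratio_lt {A1 A2 a x b : ℝ} (hA1 : 0 < A1) (h12 : A1 < A2) (hax : a < x) (hxb : x < b) :
    (Real.exp (x / A1) - Real.exp (a / A1)) / (Real.exp (b / A1) - Real.exp (a / A1)) <
    (Real.exp (x / A2) - Real.exp (a / A2)) / (Real.exp (b / A2) - Real.exp (a / A2)) := by
  have hA2 : 0 < A2 := hA1.trans h12
  have ht : 1 < A2 / A1 := by rwa [one_lt_div hA1]
  have key : ∀ y, Real.exp (y / A1) = (Real.exp (y / A2)) ^ (A2 / A1) := by
    intro y
    rw [← Real.exp_mul]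
    congr 1
    field_simp
  have e1 : Real.exp (a / A2) < Real.exp (x / A2) := by
    apply Real.exp_lt_exp.2; gcongr
  have e2 : Real.exp (x / A2) < Real.exp (b / A2) := by
    apply Real.exp_lt_exp.2; gcongr
  have e3 : Real.exp (a / A1) < Real.exp (b / A1) := by
    apply Real.exp_lt_exp.2; gcongr; linarith
  have h := (strictConvexOn_rpow ht).secant_strict_mono
    (a := Real.exp (a / A2)) (x := Real.exp (x / A2)) (y := Real.exp (b / A2))
    (Real.exp_pos _).le (Real.exp_pos _).le (Real.exp_pos _).le e1.ne' (e1.trans e2).ne' e2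
  simp only [← key] at h
  rw [div_lt_div_iff₀ (by linarith) (by linarith)] at h ⊢
  linarith

lemma curve_props {Isc Voc Rs Gsh A Iph Io : ℝ}
    (hVoc : Rs * Isc < Voc) (hRs0 : 0 ≤ Rs)
    (hGsh0 : 0 ≤ Gsh) (hK : 0 < Isc - Gsh * (Voc - Rs * Isc)) (hA : 0 < A)
    (hIo : Io = (Isc - Gsh * (Voc - Rs * Isc)) /
        (Real.exp (Voc / A) - Real.exp (Rs * Isc / A)))
    (hIph : Iph = ((Rs * Gsh + 1) * Isc * Real.exp (Voc / A)
        - Gsh * Voc * Real.exp (Rs * Isc / A)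
        - (Rs * Gsh + 1) * Isc + Gsh * Voc) /
        (Real.exp (Voc / A) - Real.exp (Rs * Isc / A)))
    (I : ℝ → ℝ)
    (hI : ∀ V, Iph =
      Io * (Real.exp ((V + Rs * I V) / A) - 1) + Gsh * (V + Rs * I V) + I V) :
    ∃ F : ℝ → ℝ, (∀ x, F x = Isc - Gsh * (x - Rs * Isc) - (Isc - Gsh * (Voc - Rs * Isc)) *
        ((Real.exp (x / A) - Real.exp (Rs * Isc / A)) /
          (Real.exp (Voc / A) - Real.exp (Rs * Isc / A)))) ∧ StrictAnti F ∧
      (∀ V, I V = F (V + Rs * I V)) ∧ Continuous I ∧ I Voc = 0 ∧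
      (∀ V, 0 < V → Rs * Isc < V + Rs * I V) ∧ 
      (∀ V, V < Voc → V + Rs * I V < Voc ∧ 0 < I V) := by
  have e3 : Real.exp (Rs * Isc / A) < Real.exp (Voc / A) := by
    apply Real.exp_lt_exp.2; gcongr
  have hD : 0 < Real.exp (Voc / A) - Real.exp (Rs * Isc / A) := by linarith
  have hIo0 : 0 < Io := by rw [hIo]; positivity
  obtain ⟨F, hF⟩ : ∃ F : ℝ → ℝ, ∀ x, F x = Iph - Io * (Real.exp (x / A) - 1) - Gsh * x :=
    ⟨_, fun _ => rfl⟩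
  have hF2 : ∀ x, F x = Isc - Gsh * (x - Rs * Isc) - (Isc - Gsh * (Voc - Rs * Isc)) *
        ((Real.exp (x / A) - Real.exp (Rs * Isc / A)) /
          (Real.exp (Voc / A) - Real.exp (Rs * Isc / A))) := by
    intro x
    rw [hF, hIph, hIo]
    generalize Real.exp (Voc / A) = q at *
    generalize Real.exp (Rs * Isc / A) = p at *
    generalize Real.exp (x / A) = u at *
    have := hD.ne'
    field_simp
    ring
  have hanti : StrictAnti F := by
    intro x y hxy
    rw [hF, hF]
    have h1 : Real.exp (x / A) < Real.exp (y / A) := by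
      apply Real.exp_lt_exp.2; gcongr
    have := mul_lt_mul_of_pos_left h1 hIo0
    have := mul_le_mul_of_nonneg_left hxy.le hGsh0
    linarith
  have hIF : ∀ V, I V = F (V + Rs * I V) := by
    intro V
    rw [hF]; linarith [hI V]
  have hFa : F (Rs * Isc) = Isc := by rw [hF2]; simp
  have hFb : F Voc = 0 := by rw [hF2, div_self hD.ne']; ring
  have hFc : Continuous F := by
    rw [funext hF]; fun_prop
  have hmono : ∀ V W, V ≤ W → V + Rs * I V ≤ W + Rs * I W := by
    intro V W h
    by_contra! hc
    have h1 := hanti hc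
    rw [← hIF, ← hIF] at h1
    have := mul_le_mul_of_nonneg_left h1.le hRs0
    linarith
  have hlip : ∀ V W, V ≤ W → (W + Rs * I W) - (V + Rs * I V) ≤ W - V := by
    intro V W h
    have h1 := hanti.antitone (hmono V W h)
    rw [← hIF, ← hIF] at h1
    have := mul_le_mul_of_nonneg_left h1 hRs0
    linarith
  have hxc : Continuous (fun V => V + Rs * I V) := by
    apply LipschitzWith.continuous (K := 1)
    apply LipschitzWith.of_dist_le_mul
    intro V W
    simp only [Real.dist_eq, NNReal.coe_one, one_mul]
    rcases le_total V W with h | h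
    · rw [abs_sub_comm, abs_sub_comm V W, abs_of_nonneg (by linarith [hmono V W h]),
        abs_of_nonneg (by linarith)]
      exact hlip V W h
    · rw [abs_of_nonneg (by linarith [hmono W V h]), abs_of_nonneg (by linarith)]
      exact hlip W V h
  refine ⟨F, hF2, hanti, hIF, ?_, ?_, ?_, ?_⟩
  · have : I = fun V => F (V + Rs * I V) := funext hIF
    rw [this]
    exact hFc.comp hxc
  · have h0 := hIF Voc
    rcases lt_trichotomy (I Voc) 0 with h | h | h
    · have h2 := mul_nonneg hRs0 (neg_nonneg.2 h.le)
      have := hanti.antitone (show Voc + Rs * I Voc ≤ Voc by linarith)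
      linarith
    · exact h
    · have h2 := mul_nonneg hRs0 h.le
      have := hanti.antitone (show Voc ≤ Voc + Rs * I Voc by linarith)
      linarith
  · intro V hV
    by_contra! hc
    have h1 := hanti.antitone hc
    rw [← hIF, hFa] at h1
    have := mul_le_mul_of_nonneg_left h1 hRs0
    linarith
  · intro V hV
    have hx : V + Rs * I V < Voc := by
      by_contra! hc
      have h1 := hanti.antitone hc
      rw [← hIF, hFb] at h1
      have := mul_le_mul_of_nonneg_left h1 hRs0
      linarith
    refine ⟨hx, ?_⟩
    have h1 := hanti hx
    rwa [← hIF, hFb] at h1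

/-- The maximum power of the SDM (passing through the short- and open-circuit
points) decreases with the equivalent factor of the diode A: if A₁ < A₂ then
the corresponding SDM solution functions satisfy I₁(V) > I₂(V) on (0, V_oc),
and the maximum power for A₁ exceeds that for A₂. -/
theorem stmt_14 (Isc Voc Rs Gsh A1 A2 : ℝ)
    (hIsc : 0 < Isc) (hVoc : 0 < Voc)
    (hRs0 : 0 ≤ Rs) (hRs1 : Rs < Voc / Isc)
    (hGsh0 : 0 ≤ Gsh) (hGsh1 : Gsh < Isc / (Voc - Rs * Isc))
    (hA1 : 0 < A1) (hA12 : A1 < A2)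
    (Iph1 Io1 Iph2 Io2 : ℝ)
    (hIo1 : Io1 = (Isc - Gsh * (Voc - Rs * Isc)) /
        (Real.exp (Voc / A1) - Real.exp (Rs * Isc / A1)))
    (hIph1 : Iph1 = ((Rs * Gsh + 1) * Isc * Real.exp (Voc / A1)
        - Gsh * Voc * Real.exp (Rs * Isc / A1)
        - (Rs * Gsh + 1) * Isc + Gsh * Voc) /
        (Real.exp (Voc / A1) - Real.exp (Rs * Isc / A1)))
    (hIo2 : Io2 = (Isc - Gsh * (Voc - Rs * Isc)) /
        (Real.exp (Voc / A2) - Real.exp (Rs * Isc / A2)))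
    (hIph2 : Iph2 = ((Rs * Gsh + 1) * Isc * Real.exp (Voc / A2)
        - Gsh * Voc * Real.exp (Rs * Isc / A2)
        - (Rs * Gsh + 1) * Isc + Gsh * Voc) /
        (Real.exp (Voc / A2) - Real.exp (Rs * Isc / A2)))
    (hIph1pos : 0 < Iph1) (hIph2pos : 0 < Iph2)
    (I1 I2 : ℝ → ℝ)
    (hI1 : ∀ V, Iph1 =
      Io1 * (Real.exp ((V + Rs * I1 V) / A1) - 1) + Gsh * (V + Rs * I1 V) + I1 V)
    (hI2 : ∀ V, Iph2 =
      Io2 * (Real.exp ((V + Rs * I2 V) / A2) - 1) + Gsh * (V + Rs * I2 V) + I2 V) :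
    (∀ V ∈ Set.Ioo (0 : ℝ) Voc, I2 V < I1 V) ∧
    ∃ M1 M2 : ℝ,
      IsGreatest ((fun V => V * I1 V) '' Set.Icc 0 Voc) M1 ∧
      IsGreatest ((fun V => V * I2 V) '' Set.Icc 0 Voc) M2 ∧
      M2 < M1 := by
  have hab : Rs * Isc < Voc := by rwa [lt_div_iff₀ hIsc] at hRs1
  have hK : 0 < Isc - Gsh * (Voc - Rs * Isc) := by
    rw [lt_div_iff₀ (by linarith)] at hGsh1; linarith
  obtain ⟨F1, hF1, han1, hIF1, hc1, hz1, ha1, hb1⟩ :=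
    curve_props hab hRs0 hGsh0 hK hA1 hIo1 hIph1 I1 hI1
  obtain ⟨F2, hF2, han2, hIF2, hc2, hz2, ha2, hb2⟩ :=
    curve_props hab hRs0 hGsh0 hK (hA1.trans hA12) hIo2 hIph2 I2 hI2
  have main : ∀ V ∈ Set.Ioo (0 : ℝ) Voc, I2 V < I1 V := by
    intro V hV
    by_contra! hc
    have h1 := mul_le_mul_of_nonneg_left hc hRs0
    have h2 := han1.antitone (show V + Rs * I1 V ≤ V + Rs * I2 V by linarith)
    rw [← hIF1] at h2
    have h3 := mul_lt_mul_of_pos_left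
      (ratio_lt hA1 hA12 (ha2 V hV.1) (hb2 V hV.2).1) hK
    have h4 := hF1 (V + Rs * I2 V)
    have h5 := hF2 (V + Rs * I2 V)
    rw [← hIF2] at h5
    linarith
  refine ⟨main, ?_⟩
  have hne : (Set.Icc (0 : ℝ) Voc).Nonempty := ⟨0, by simp [hVoc.le]⟩
  obtain ⟨M1, hM1⟩ := ((isCompact_Icc (a := (0 : ℝ)) (b := Voc)).image
    (continuous_id.mul hc1)).exists_isGreatest (hne.image _)
  obtain ⟨M2, hM2⟩ := ((isCompact_Icc (a := (0 : ℝ)) (b := Voc)).image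
    (continuous_id.mul hc2)).exists_isGreatest (hne.image _)
  refine ⟨M1, M2, hM1, hM2, ?_⟩
  obtain ⟨V, hV, hVM⟩ := hM2.1
  have hVM' : V * I2 V = M2 := hVM
  have hpos : 0 < M2 := by
    have h1 : (Voc / 2) * I2 (Voc / 2) ≤ M2 :=
      hM2.2 ⟨Voc / 2, ⟨by linarith, by linarith⟩, rfl⟩
    have := mul_pos (half_pos hVoc) (hb2 (Voc / 2) (by linarith)).2
    linarith
  have hV0 : 0 < V := by
    rcases hV.1.eq_or_lt with h | h
    · rw [← h] at hVM'; linarith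
    · exact h
  have hV1 : V < Voc := by
    rcases hV.2.eq_or_lt with h | h
    · rw [h, hz2] at hVM'; linarith
    · exact h
  have h1 : V * I1 V ≤ M1 := hM1.2 ⟨V, hV, rfl⟩
  have := mul_lt_mul_of_pos_left (main V ⟨hV0, hV1⟩) hV0
  linarith
end

section
/- Let V_oc > 0 and A > 0. Then there exists exactly one V_mp > 0 satisfying (1 + V_mp/A)·exp(V_mp/A) = exp(V_oc/A), and this V_mp satisfies V_oc/2 < V_mp < V_oc. -/
theorem aux_mono (A : ℝ) (hA : 0 < A) (x y : ℝ) (hx : 0 < x) (h : x < y) :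
    (1 + x / A) * Real.exp (x / A) < (1 + y / A) * Real.exp (y / A) := by
  have h1 : x / A < y / A := div_lt_div_of_pos_right h hA
  have h2 : 0 < x / A := div_pos hx hA
  have h3 := Real.exp_lt_exp.mpr h1
  have h4 := Real.exp_pos (x / A)
  apply mul_lt_mul'' (by linarith) h3 (by linarith) h4.le

/-- There is exactly one V_mp > 0 satisfying
(1 + V_mp/A)·exp(V_mp/A) = exp(V_oc/A), and it lies in (V_oc/2, V_oc). -/
theorem stmt_15 (Voc A : ℝ) (hVoc : 0 < Voc) (hA : 0 < A) :
    (∃! Vmp : ℝ, 0 < Vmp ∧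
      (1 + Vmp / A) * Real.exp (Vmp / A) = Real.exp (Voc / A)) ∧
    ∀ Vmp : ℝ, 0 < Vmp →
      (1 + Vmp / A) * Real.exp (Vmp / A) = Real.exp (Voc / A) →
      Voc / 2 < Vmp ∧ Vmp < Voc := by
  have hc : 0 < Voc / A := div_pos hVoc hA
  refine ⟨?_, ?_⟩
  · have hcont : ContinuousOn (fun v : ℝ => (1 + v / A) * Real.exp (v / A)) (Set.Icc 0 Voc) := by
      fun_prop
    have hm : Real.exp (Voc / A) ∈ Set.Icc ((fun v : ℝ => (1 + v / A) * Real.exp (v / A)) 0)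
        ((fun v : ℝ => (1 + v / A) * Real.exp (v / A)) Voc) := by
      constructor
      · simp [hc.le]
      · have := Real.exp_pos (Voc / A)
        show Real.exp (Voc / A) ≤ (1 + Voc / A) * Real.exp (Voc / A)
        nlinarith
    obtain ⟨v, hv, hveq⟩ := intermediate_value_Icc hVoc.le hcont hm
    have hveq' : (1 + v / A) * Real.exp (v / A) = Real.exp (Voc / A) := hveq
    have hv0 : 0 < v := by
      refine lt_of_le_of_ne hv.1 ?_
      rintro rfl
      have := Real.one_lt_exp_iff.mpr hc
      simp only [zero_div, Real.exp_zero] at hveq'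
      linarith
    refine ⟨v, ⟨hv0, hveq'⟩, ?_⟩
    · rintro w ⟨hw, hweq⟩
      rcases lt_trichotomy w v with h | h | h
      · have := aux_mono A hA w v hw h
        linarith
      · exact h
      · have := aux_mono A hA v w hv0 h
        linarith
  · intro v hv h
    have hx : 0 < v / A := div_pos hv hA
    have he := Real.exp_pos (v / A)
    constructor
    · have h1 := Real.add_one_lt_exp hx.ne'
      have h2 : Real.exp (Voc / A) < Real.exp (v / A + v / A) := by
        rw [Real.exp_add, ← h]
        exact mul_lt_mul_of_pos_right (by linarith) he
      have h3 := Real.exp_lt_exp.mp h2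
      rw [← add_div, div_lt_div_iff_of_pos_right hA] at h3
      linarith
    · have h2 : Real.exp (v / A) < Real.exp (Voc / A) := by
        rw [← h]; nlinarith
      have h3 := Real.exp_lt_exp.mp h2
      rwa [div_lt_div_iff_of_pos_right hA] at h3
end

section
/- Let V_oc > 0 and for each A > 0 let V_mp(A) denote the unique positive solution of (1 + V_mp/A)·exp(V_mp/A) = exp(V_oc/A). Then V_mp(A) → V_oc as A → 0⁺ and V_mp(A) → V_oc/2 as A → +∞. Moreover, with I_sc > 0 and I_mp(A) := I_sc·exp(V_oc/A)·V_mp(A) / ((exp(V_oc/A) − 1)·(A + V_mp(A))), one has I_mp(A) → I_sc as A → 0⁺ and I_mp(A) → I_sc/2 as A → +∞. -/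
open Filter Topology

/-- Limits of the NRL maximum power point: V_mp(A) → V_oc as A → 0⁺ and
V_mp(A) → V_oc/2 as A → +∞; I_mp(A) → I_sc as A → 0⁺ and I_mp(A) → I_sc/2 as
A → +∞. -/
theorem stmt_16 (Voc Isc : ℝ) (hVoc : 0 < Voc) (hIsc : 0 < Isc)
    (Vmp : ℝ → ℝ)
    (hVmp : ∀ A, 0 < A → 0 < Vmp A ∧
      (1 + Vmp A / A) * Real.exp (Vmp A / A) = Real.exp (Voc / A)) :
    Filter.Tendsto Vmp (nhdsWithin 0 (Set.Ioi 0)) (nhds Voc) ∧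
    Filter.Tendsto Vmp Filter.atTop (nhds (Voc / 2)) ∧
    Filter.Tendsto (fun A => Isc * Real.exp (Voc / A) * Vmp A /
        ((Real.exp (Voc / A) - 1) * (A + Vmp A)))
      (nhdsWithin 0 (Set.Ioi 0)) (nhds Isc) ∧
    Filter.Tendsto (fun A => Isc * Real.exp (Voc / A) * Vmp A /
        ((Real.exp (Voc / A) - 1) * (A + Vmp A)))
      Filter.atTop (nhds (Isc / 2)) := by
  have hlog : ∀ A, 0 < A → A * Real.log (1 + Vmp A / A) + Vmp A = Voc := by
    intro A hA
    obtain ⟨h1, h2⟩ := hVmp A hA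
    have h3 : 0 < Vmp A / A := div_pos h1 hA
    have h4 := congrArg Real.log h2
    rw [Real.log_mul (by positivity) (by positivity), Real.log_exp, Real.log_exp] at h4
    have h5 := congrArg (fun x => A * x) h4
    simp only [mul_add, mul_div_cancel₀ _ hA.ne'] at h5
    exact h5
  have hlt : ∀ A, 0 < A → Vmp A ≤ Voc := by
    intro A hA
    have h1 := hlog A hA
    have h3 : 0 < Vmp A / A := div_pos (hVmp A hA).1 hA
    have h4 : 0 ≤ Real.log (1 + Vmp A / A) := Real.log_nonneg (by linarith)
    have := mul_nonneg hA.le h4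
    linarith
  have hV0 : Tendsto Vmp (𝓝[>] 0) (𝓝 Voc) := by
    have hc : Tendsto (fun A : ℝ => Voc - (A * Real.log (A + Voc) - A * Real.log A)) (𝓝[>] 0) (𝓝 Voc) := by
      have h1 : ContinuousAt (fun A : ℝ => Voc - (A * Real.log (A + Voc) - A * Real.log A)) 0 := by
        have h2 : ContinuousAt (fun A : ℝ => A * Real.log A) 0 := Real.continuous_mul_log.continuousAt
        have h3 : ContinuousAt (fun A : ℝ => A * Real.log (A + Voc)) 0 :=
          continuousAt_id.mul ((continuousAt_id.add continuousAt_const).log (by simpa using hVoc.ne'))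
        exact continuousAt_const.sub (h3.sub h2)
      have h4 := h1.tendsto
      simp only [zero_mul, sub_zero] at h4
      exact h4.mono_left nhdsWithin_le_nhds
    refine tendsto_of_tendsto_of_tendsto_of_le_of_le' hc tendsto_const_nhds ?_ ?_
    · filter_upwards [self_mem_nhdsWithin] with A hA
      have hA : 0 < A := hA
      have h1 := hlog A hA
      have h3 : 0 < Vmp A / A := div_pos (hVmp A hA).1 hA
      have h4 : Real.log (1 + Vmp A / A) ≤ Real.log ((A + Voc) / A) := by
        apply Real.log_le_log (by linarith)
        rw [add_div, div_self hA.ne']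
        have := hlt A hA
        gcongr
      rw [Real.log_div (by positivity) hA.ne'] at h4
      have := mul_le_mul_of_nonneg_left h4 hA.le
      linarith
    · filter_upwards [self_mem_nhdsWithin] with A hA
      exact hlt A hA
  have hd : ∀ c : ℝ, Tendsto (fun A : ℝ => c / A) atTop (𝓝 0) := fun c =>
    tendsto_const_nhds.div_atTop tendsto_id
  have hVi : Tendsto Vmp atTop (𝓝 (Voc / 2)) := by
    have hu : Tendsto (fun A : ℝ => Voc / (1 + 1 / (1 + Voc / A))) atTop (𝓝 (Voc / 2)) := by
      have h1 : Tendsto (fun A : ℝ => 1 + Voc / A) atTop (𝓝 (1 + 0)) := tendsto_const_nhds.add (hd Voc)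
      have h2 : Tendsto (fun A : ℝ => 1 + 1 / (1 + Voc / A)) atTop (𝓝 (1 + 1 / (1 + 0))) :=
        tendsto_const_nhds.add (tendsto_const_nhds.div h1 (by norm_num))
      have h3 := (tendsto_const_nhds (x := Voc)).div h2 (by norm_num)
      have h4 : Voc / 2 = Voc / (1 + 1 / (1 + 0)) := by norm_num
      rw [h4]
      exact h3
    refine tendsto_of_tendsto_of_tendsto_of_le_of_le' tendsto_const_nhds hu ?_ ?_
    · filter_upwards [eventually_gt_atTop 0] with A hA
      have h1 := hlog A hA
      have h3 : 0 < Vmp A / A := div_pos (hVmp A hA).1 hA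
      have h4 : Real.log (1 + Vmp A / A) ≤ Vmp A / A := by
        have := Real.log_le_sub_one_of_pos (x := 1 + Vmp A / A) (by linarith)
        linarith
      have := mul_le_mul_of_nonneg_left h4 hA.le
      rw [mul_div_cancel₀ _ hA.ne'] at this
      linarith
    · filter_upwards [eventually_gt_atTop 0] with A hA
      have h1 := hlog A hA
      have hV := (hVmp A hA).1
      have h3 : 0 < Vmp A / A := div_pos hV hA
      have h4 := Real.one_sub_inv_le_log_of_pos (x := 1 + Vmp A / A) (by linarith)
      have h5 := mul_le_mul_of_nonneg_left h4 hA.le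
      have h6 : A * (1 - (1 + Vmp A / A)⁻¹) = Vmp A * (1 / (1 + Vmp A / A)) := by
        field_simp
        ring
      have h7 : 1 / (1 + Voc / A) ≤ 1 / (1 + Vmp A / A) := by
        have := hlt A hA
        gcongr
      have h8 := mul_le_mul_of_nonneg_left h7 hV.le
      rw [le_div_iff₀ (by positivity)]
      linarith
  refine ⟨hV0, hVi, ?_, ?_⟩
  · have hid : Tendsto (fun A : ℝ => A) (𝓝[>] 0) (𝓝 0) := nhdsWithin_le_nhds
    have he : Tendsto (fun A : ℝ => Real.exp (-(Voc / A))) (𝓝[>] 0) (𝓝 0) := by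
      have h1 : Tendsto (fun A : ℝ => Voc / A) (𝓝[>] 0) atTop := by
        simp only [div_eq_mul_inv]
        exact tendsto_inv_nhdsGT_zero.const_mul_atTop hVoc
      exact Real.tendsto_exp_neg_atTop_nhds_zero.comp h1
    have hden := ((tendsto_const_nhds (x := (1:ℝ))).sub he).mul (hid.add hV0)
    have hq := (hV0.const_mul Isc).div hden (by simpa using hVoc.ne')
    have hval : Isc * Voc / ((1 - 0) * (0 + Voc)) = Isc := by
      field_simp
      try ring
    rw [hval] at hq
    refine hq.congr' ?_
    filter_upwards [self_mem_nhdsWithin] with A hA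
    have hE := Real.exp_pos (Voc / A)
    simp only [Pi.div_apply]
    rw [Real.exp_neg, ← mul_div_mul_left _ _ hE.ne']
    congr 1
    · ring
    · rw [← mul_assoc, mul_sub, mul_inv_cancel₀ hE.ne', mul_one]
  · have he : Tendsto (fun A : ℝ => Real.exp (Voc / A)) atTop (𝓝 1) := by
      have := (Real.continuous_exp.tendsto 0).comp (hd Voc)
      rwa [Real.exp_zero] at this
    have hg : Tendsto (fun A : ℝ => A * (Real.exp (Voc / A) - 1)) atTop (𝓝 Voc) := by
      have hu := he.const_mul Voc
      rw [mul_one] at hu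
      refine tendsto_of_tendsto_of_tendsto_of_le_of_le' tendsto_const_nhds hu ?_ ?_
      · filter_upwards [eventually_gt_atTop 0] with A hA
        have h1 := Real.add_one_le_exp (Voc / A)
        have h2 := mul_le_mul_of_nonneg_left h1 hA.le
        rw [mul_add, mul_div_cancel₀ _ hA.ne'] at h2
        linarith
      · filter_upwards [eventually_gt_atTop 0] with A hA
        have hE := Real.exp_pos (Voc / A)
        have h1 := Real.add_one_le_exp (-(Voc / A))
        rw [Real.exp_neg] at h1
        have h2 := mul_le_mul_of_nonneg_left h1 (mul_pos hA hE).le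
        rw [mul_assoc A _ (Real.exp (Voc / A))⁻¹, mul_inv_cancel₀ hE.ne'] at h2
        have h3 : A * Real.exp (Voc / A) * (-(Voc / A) + 1) = A * Real.exp (Voc / A) - Voc * Real.exp (Voc / A) := by
          field_simp
          ring
        linarith
    have hVA : Tendsto (fun A : ℝ => 1 + Vmp A / A) atTop (𝓝 (1 + 0)) :=
      tendsto_const_nhds.add (hVi.div_atTop tendsto_id)
    have hq := ((he.const_mul Isc).mul hVi).div (hg.mul hVA) (by simpa using hVoc.ne')
    have hval : Isc * 1 * (Voc / 2) / (Voc * (1 + 0)) = Isc / 2 := by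
      field_simp
      try ring
    rw [hval] at hq
    refine hq.congr' ?_
    filter_upwards [eventually_gt_atTop 0] with A hA
    simp only [Pi.div_apply]
    congr 1
    field_simp
end

section
/- Let I_sc, V_oc > 0 and A > 0, and let V_mp be the unique positive solution of (1 + V_mp/A)·exp(V_mp/A) = exp(V_oc/A). Set I_mp := I_sc·exp(V_oc/A)·V_mp / ((exp(V_oc/A) − 1)·(A + V_mp)). Then the pair (V_mp, I_mp) satisfies both maximum-power-point equations of the null resistive loss model: −(I_sc − I_mp)·exp(V_oc/A) + I_sc·exp(V_mp/A) − I_mp = 0 and A·I_mp·(exp(V_oc/A) − 1) − I_sc·V_mp·exp(V_mp/A) = 0; moreover I_sc/2 < I_mp < I_sc. -/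
/-- The pair (V_mp, I_mp) of the null resistive loss model satisfies both
maximum-power-point equations, and I_sc/2 < I_mp < I_sc. -/
theorem stmt_17 (Isc Voc A Vmp Imp : ℝ)
    (hIsc : 0 < Isc) (hVoc : 0 < Voc) (hA : 0 < A)
    (hVmp0 : 0 < Vmp)
    (hVmp : (1 + Vmp / A) * Real.exp (Vmp / A) = Real.exp (Voc / A))
    (hImp : Imp = Isc * Real.exp (Voc / A) * Vmp /
      ((Real.exp (Voc / A) - 1) * (A + Vmp))) :
    -(Isc - Imp) * Real.exp (Voc / A) + Isc * Real.exp (Vmp / A) - Imp = 0 ∧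
    A * Imp * (Real.exp (Voc / A) - 1) - Isc * Vmp * Real.exp (Vmp / A) = 0 ∧
    Isc / 2 < Imp ∧ Imp < Isc := by
  obtain ⟨x, hx⟩ : ∃ x, x = Vmp / A := ⟨_, rfl⟩
  have hV : Vmp = x * A := by rw [hx]; field_simp
  have hx0 : 0 < x := by rw [hx]; positivity
  rw [← hx] at hVmp ⊢
  have he : 1 < Real.exp x := Real.one_lt_exp_iff.mpr hx0
  have hE : 1 < Real.exp (Voc / A) := Real.one_lt_exp_iff.mpr (by positivity)
  have hlow : 0 < x * Real.exp x - Real.exp x + 1 := by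
    have h1 := Real.add_one_lt_exp (x := -x) (by linarith)
    have h2 : Real.exp (-x) * Real.exp x = 1 := by
      rw [← Real.exp_add]; simp
    have h3 := mul_lt_mul_of_pos_right h1 (Real.exp_pos x)
    rw [h2] at h3
    linarith
  generalize Real.exp x = e at *
  generalize Real.exp (Voc / A) = E at *
  have hE' : 0 < E - 1 := by linarith
  have key : Imp * (E - 1) = Isc * (x * e) := by
    have h1 : A + Vmp ≠ 0 := by positivity
    have h2 : E - 1 ≠ 0 := hE'.ne'
    rw [hImp, div_mul_eq_mul_div, div_eq_iff (mul_ne_zero h2 h1), ← hVmp, hV]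
    ring
  refine ⟨?_, ?_, ?_, ?_⟩
  · linear_combination key + Isc * hVmp
  · rw [hV]; linear_combination A * key
  · have h := mul_pos hIsc hlow
    refine lt_of_mul_lt_mul_right ?_ hE'.le
    rw [key, ← hVmp]
    linarith
  · have h := mul_pos hIsc (sub_pos.mpr he)
    refine lt_of_mul_lt_mul_right ?_ hE'.le
    rw [key, ← hVmp]
    linarith
end

section
/- Let I_sc, V_oc > 0, let (V_x, I_x) satisfy 0 < V_x < V_oc and I_sc·(1 − V_x/V_oc) < I_x < I_sc, let A > 0 and R_s > 0 satisfy R_s·I_sc < V_x + R_s·I_x < V_oc, and define F_cd(A, R_s) := (V_x − R_s·(I_sc − I_x))·exp(V_oc/A) − (V_oc − R_s·I_sc)·exp((V_x + R_s·I_x)/A) + (V_oc − V_x − R_s·I_x)·exp(R_s·I_sc/A) and F_sh(A, R_s) := (I_sc − I_x)·exp(V_oc/A) − I_sc·exp((V_x + R_s·I_x)/A) + I_x·exp(R_s·I_sc/A). If F_cd(A, R_s) ≠ 0, then the linear system in (I_ph, I_o, G_sh) obtained by imposing the SDM equation at (0, I_sc), at (V_x, I_x) and at (V_oc, 0) has a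 unique solution, and in it G_sh = F_sh(A, R_s)/F_cd(A, R_s) and I_o = (V_x·I_sc + V_oc·I_x − V_oc·I_sc)/F_cd(A, R_s). -/
/-- Imposing the SDM equation at (0, I_sc), (V_x, I_x) and (V_oc, 0) yields a
linear system in (I_ph, I_o, G_sh) with a unique solution (when F_cd ≠ 0), in
which G_sh = F_sh/F_cd and I_o = (V_x·I_sc + V_oc·I_x − V_oc·I_sc)/F_cd. -/
theorem stmt_18 (Isc Voc Vx Ix A Rs Fcd Fsh : ℝ)
    (hIsc : 0 < Isc) (hVoc : 0 < Voc) (hVx0 : 0 < Vx) (hVxVoc : Vx < Voc)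
    (hIx1 : Isc * (1 - Vx / Voc) < Ix) (hIx2 : Ix < Isc)
    (hA : 0 < A) (hRs : 0 < Rs)
    (hcond1 : Rs * Isc < Vx + Rs * Ix) (hcond2 : Vx + Rs * Ix < Voc)
    (hFcd : Fcd = (Vx - Rs * (Isc - Ix)) * Real.exp (Voc / A)
        - (Voc - Rs * Isc) * Real.exp ((Vx + Rs * Ix) / A)
        + (Voc - Vx - Rs * Ix) * Real.exp (Rs * Isc / A))
    (hFsh : Fsh = (Isc - Ix) * Real.exp (Voc / A)
        - Isc * Real.exp ((Vx + Rs * Ix) / A)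
        + Ix * Real.exp (Rs * Isc / A))
    (hFcdne : Fcd ≠ 0) :
    (∃! t : ℝ × ℝ × ℝ,
        t.1 = t.2.1 * (Real.exp ((0 + Rs * Isc) / A) - 1) + t.2.2 * (0 + Rs * Isc) + Isc ∧
        t.1 = t.2.1 * (Real.exp ((Vx + Rs * Ix) / A) - 1) + t.2.2 * (Vx + Rs * Ix) + Ix ∧
        t.1 = t.2.1 * (Real.exp ((Voc + Rs * 0) / A) - 1) + t.2.2 * (Voc + Rs * 0) + 0) ∧
    ∀ Iph Io Gsh : ℝ,
      (Iph = Io * (Real.exp ((0 + Rs * Isc) / A) - 1) + Gsh * (0 + Rs * Isc) + Isc ∧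
       Iph = Io * (Real.exp ((Vx + Rs * Ix) / A) - 1) + Gsh * (Vx + Rs * Ix) + Ix ∧
       Iph = Io * (Real.exp ((Voc + Rs * 0) / A) - 1) + Gsh * (Voc + Rs * 0) + 0) →
      Gsh = Fsh / Fcd ∧ Io = (Vx * Isc + Voc * Ix - Voc * Isc) / Fcd := by
  simp only [zero_add, mul_zero, add_zero]
  generalize Real.exp (Voc / A) = ec at *
  generalize Real.exp ((Vx + Rs * Ix) / A) = eb at *
  generalize Real.exp (Rs * Isc / A) = ea at *
  have key : ∀ Iph Io Gsh : ℝ,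
      (Iph = Io * (ea - 1) + Gsh * (Rs * Isc) + Isc ∧
       Iph = Io * (eb - 1) + Gsh * (Vx + Rs * Ix) + Ix ∧
       Iph = Io * (ec - 1) + Gsh * Voc) →
      Gsh = Fsh / Fcd ∧ Io = (Vx * Isc + Voc * Ix - Voc * Isc) / Fcd := by
    rintro Iph Io Gsh ⟨e1, e2, e3⟩
    constructor
    · rw [eq_div_iff hFcdne, hFcd, hFsh]
      linear_combination (ec - ea) * (e1 - e2) - (eb - ea) * (e1 - e3)
    · rw [eq_div_iff hFcdne, hFcd]
      linear_combination (Vx + Rs * Ix - Rs * Isc) * (e1 - e3) - (Voc - Rs * Isc) * (e1 - e2)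
  refine ⟨⟨((Vx * Isc + Voc * Ix - Voc * Isc) / Fcd * (ec - 1) + Fsh / Fcd * Voc,
    (Vx * Isc + Voc * Ix - Voc * Isc) / Fcd, Fsh / Fcd), ⟨?_, ?_, rfl⟩, ?_⟩, key⟩
  · dsimp only
    field_simp
    rw [hFcd, hFsh]
    ring
  · dsimp only
    field_simp
    rw [hFcd, hFsh]
    ring
  · rintro ⟨p, o, g⟩ h
    dsimp only at h
    obtain ⟨hg, ho⟩ := key p o g h
    have h3 := h.2.2
    rw [hg, ho] at h3
    rw [h3, hg, ho]
end

section
/- Let I_sc, V_oc > 0, let (V_x, I_x) satisfy 0 < V_x < V_oc and I_sc·(1 − V_x/V_oc) < I_x < I_sc, let A > 0 and R_s > 0 satisfy R_s·I_sc < V_x + R_s·I_x < V_oc, and let (I_ph, I_o, G_sh) be the unique solution of the linear system obtained by imposing the SDM equation at (0, I_sc), (V_x, I_x) and (V_oc, 0) (assuming the system is nondegenerate). If G_sh > 0, then also I_ph > 0 and I_o > 0. -/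
/-- If (I_ph, I_o, G_sh) is the unique solution of the linear system obtained by
imposing the SDM equation at (0, I_sc), (V_x, I_x) and (V_oc, 0), and G_sh > 0,
then also I_ph > 0 and I_o > 0. -/
theorem stmt_19 (Isc Voc Vx Ix A Rs Iph Io Gsh : ℝ)
    (hIsc : 0 < Isc) (hVoc : 0 < Voc) (hVx0 : 0 < Vx) (hVxVoc : Vx < Voc)
    (hIx1 : Isc * (1 - Vx / Voc) < Ix) (hIx2 : Ix < Isc)
    (hA : 0 < A) (hRs : 0 < Rs)
    (hcond1 : Rs * Isc < Vx + Rs * Ix) (hcond2 : Vx + Rs * Ix < Voc)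
    (hsys1 : Iph = Io * (Real.exp ((0 + Rs * Isc) / A) - 1) + Gsh * (0 + Rs * Isc) + Isc)
    (hsys2 : Iph = Io * (Real.exp ((Vx + Rs * Ix) / A) - 1) + Gsh * (Vx + Rs * Ix) + Ix)
    (hsys3 : Iph = Io * (Real.exp ((Voc + Rs * 0) / A) - 1) + Gsh * (Voc + Rs * 0) + 0)
    (huniq : ∃! t : ℝ × ℝ × ℝ,
        t.1 = t.2.1 * (Real.exp ((0 + Rs * Isc) / A) - 1) + t.2.2 * (0 + Rs * Isc) + Isc ∧
        t.1 = t.2.1 * (Real.exp ((Vx + Rs * Ix) / A) - 1) + t.2.2 * (Vx + Rs * Ix) + Ix ∧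
        t.1 = t.2.1 * (Real.exp ((Voc + Rs * 0) / A) - 1) + t.2.2 * (Voc + Rs * 0) + 0)
    (hGsh : 0 < Gsh) :
    0 < Iph ∧ 0 < Io := by
  have hchord : 0 < Ix * Voc - Isc * Voc + Isc * Vx := by
    have h := mul_lt_mul_of_pos_right hIx1 hVoc
    have e : Isc * (1 - Vx / Voc) * Voc = Isc * Voc - Isc * Vx := by
      field_simp
    linarith
  simp only [zero_add, mul_zero, add_zero] at hsys1 hsys2 hsys3
  have ha : 0 < Rs * Isc := mul_pos hRs hIsc
  have h1 : Rs * Isc / A < (Vx + Rs * Ix) / A := div_lt_div_of_pos_right hcond1 hA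
  have h2 : (Vx + Rs * Ix) / A < Voc / A := div_lt_div_of_pos_right hcond2 hA
  have hs := strictConvexOn_exp.slope_strict_mono_adjacent
    (Set.mem_univ (Rs * Isc / A)) (Set.mem_univ (Voc / A)) h1 h2
  rw [div_lt_div_iff₀ (by linarith) (by linarith), ← sub_div, ← sub_div,
    mul_div_assoc', mul_div_assoc', div_lt_div_iff_of_pos_right hA] at hs
  have hE : 0 < Real.exp (Rs * Isc / A) - 1 := by
    have := Real.one_lt_exp_iff.2 (div_pos ha hA)
    linarith
  generalize Real.exp (Rs * Isc / A) = Ea at *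
  generalize Real.exp ((Vx + Rs * Ix) / A) = Eb at *
  generalize Real.exp (Voc / A) = Ec at *
  have key : Io * ((Ec - Eb) * (Vx + Rs * Ix - Rs * Isc) - (Eb - Ea) * (Voc - (Vx + Rs * Ix)))
      = Ix * Voc - Isc * Voc + Isc * Vx := by
    have e1 : Io * (Eb - Ea) = Isc - Ix - Gsh * (Vx + Rs * Ix - Rs * Isc) := by linarith
    have e2 : Io * (Ec - Eb) = Ix - Gsh * (Voc - (Vx + Rs * Ix)) := by linarith
    linear_combination (Vx + Rs * Ix - Rs * Isc) * e2 - (Voc - (Vx + Rs * Ix)) * e1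
  have hIo : 0 < Io := by
    rw [← key] at hchord
    exact pos_of_mul_pos_left hchord (by linarith)
  refine ⟨?_, hIo⟩
  rw [hsys1]
  positivity
end
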